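/- Assume the growth conditions (GC) and the compactness-continuity conditions (CC), and let v* be the unique lower semicontinuous function of finite W-norm with v* = T v*. Let f₀ be a measurable selector and define the policy iteration sequences by v_n := V_{f_n} and f_{n+1} a measurable selector with T(v_n^e) = T_{f_{n+1}}(v_n^e). Then ‖v_{n+1} − v*‖_W ≤ γ·‖v_n − v*‖_W for all n ≥ 0, and consequently ‖v_n − v*‖_W ≤ γ^n·‖v_0 − v*‖_W; that is, the policy iteration functions converge linearly to v* in the weighted norm ‖·‖_W. -/

import Mathlib

open MeasureTheory ProbabilityTheory Filter Topology
open scoped ENNReal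

/-- The weighted norm `‖u‖_W = sup_x |u x| / W x`, valued in `ℝ≥0∞`. -/
noncomputable def WNorm {X : Type*} (W u : X → ℝ) : ℝ≥0∞ :=
  ⨆ x, ENNReal.ofReal (|u x| / W x)

/-- The dynamic programming (Bellman) operator
`Tu(x) = inf_{a ∈ A(x)} [C(x,a) + α ∫ u dQ(·|x,a)]`. -/
noncomputable def Tbell {X A : Type*} [MeasurableSpace X] [MeasurableSpace A]
    (Adm : X → Set A) (Q : Kernel (X × A) X) (C : X × A → ℝ) (α : ℝ)
    (u : X → ℝ) (x : X) : ℝ :=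
  sInf ((fun a => C (x, a) + α * ∫ y, u y ∂(Q (x, a))) '' Adm x)

/-- The lower semicontinuous envelope of `u : X → ℝ`, computed in the extended
reals: `uᵉ(x) = sup_{r>0} inf_{y ∈ B_r(x)} u(y)`. -/
noncomputable def lscEnvE {X : Type*} [MetricSpace X] (u : X → ℝ) (x : X) : EReal :=
  ⨆ r ∈ Set.Ioi (0 : ℝ), ⨅ y ∈ Metric.ball x r, (u y : EReal)

/-!
Write `T_f u (x) = C(x, f x) + α ∫ u dQ(·|x, f x)` and let `e = vᵉ` be the envelope of `v = V_f`.
Since `C` is lower semicontinuous, `Q` is weakly continuous and `A(·)` is compact-valued and upper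
semicontinuous, `T` preserves lower semicontinuity. Hence `T e` is a lower semicontinuous minorant
of `T_f v = v`, so `T e ≤ e` because `e` is the greatest such minorant. If the selector `g` attains
`T e`, then `T_g e = T e ≤ e`, and the comparison principle for the contraction `T_g` gives
`V_g ≤ e`, whence `V_g = T_g V_g ≤ T_g e = T e`. As `v* ≤ V_g` and `e ≤ v`, this yields
`0 ≤ V_g - v* ≤ T e - T v* ≤ γ ‖v - v*‖_W W`.
-/

section WeightedNorm

variable {X : Type*} {W u w : X → ℝ}

lemma wNorm_le_ofReal_iff (hW : ∀ x, 0 < W x) {k : ℝ} (hk : 0 ≤ k) :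
    WNorm W u ≤ ENNReal.ofReal k ↔ ∀ x, |u x| ≤ k * W x := by
  simp only [WNorm, iSup_le_iff, ENNReal.ofReal_le_ofReal_iff hk, div_le_iff₀ (hW _)]

lemma abs_le_wNorm_mul (hW : ∀ x, 0 < W x) (hu : WNorm W u < ⊤) (x : X) :
    |u x| ≤ (WNorm W u).toReal * W x :=
  (wNorm_le_ofReal_iff hW ENNReal.toReal_nonneg).1 (ENNReal.ofReal_toReal hu.ne).ge x

lemma wNorm_lt_top_of_abs_le (hW : ∀ x, 0 < W x) {k : ℝ} (h : ∀ x, |u x| ≤ k * W x) :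
    WNorm W u < ⊤ :=
  (iSup_le fun x => ENNReal.ofReal_le_ofReal ((div_le_iff₀ (hW x)).2 (h x))).trans_lt
    ENNReal.ofReal_lt_top

lemma wNorm_sub_lt_top (hW : ∀ x, 0 < W x) (hu : WNorm W u < ⊤) (hw : WNorm W w < ⊤) :
    WNorm W (fun x => u x - w x) < ⊤ := by
  refine wNorm_lt_top_of_abs_le (k := (WNorm W u).toReal + (WNorm W w).toReal) hW fun x => ?_
  calc |u x - w x| ≤ |u x| + |w x| := abs_sub _ _
    _ ≤ (WNorm W u).toReal * W x + (WNorm W w).toReal * W x :=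
        add_le_add (abs_le_wNorm_mul hW hu x) (abs_le_wNorm_mul hW hw x)
    _ = ((WNorm W u).toReal + (WNorm W w).toReal) * W x := (add_mul _ _ _).symm

/-- Membership in the space `B_W(X)` of measurable functions of finite `W`-norm, on which the
operators `T_f` act. -/
structure IsWBounded [MeasurableSpace X] (W u : X → ℝ) : Prop where
  measurable : Measurable u
  wNorm_lt_top : WNorm W u < ⊤

lemma IsWBounded.integrable [MeasurableSpace X] {μ : Measure X} (hu : IsWBounded W u)
    (hW : ∀ x, 0 < W x) (hWμ : Integrable W μ) : Integrable u μ :=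
  (hWμ.const_mul _).mono' hu.measurable.aestronglyMeasurable
    (.of_forall (abs_le_wNorm_mul hW hu.wNorm_lt_top))

end WeightedNorm

section LscEnvelope

variable {X : Type*} [MetricSpace X] {u e g : X → ℝ}

lemma lscEnvE_eq_liminf (u : X → ℝ) (x : X) :
    lscEnvE u x = liminf (fun y => (u y : EReal)) (𝓝 x) :=
  Metric.nhds_basis_ball.liminf_eq_iSup_iInf.symm

lemma lowerSemicontinuous_lscEnvE (u : X → ℝ) : LowerSemicontinuous (lscEnvE u) := by
  intro x c hc
  obtain ⟨d, hcd, hd⟩ := exists_between hc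
  rw [lscEnvE_eq_liminf] at hd
  filter_upwards [(eventually_lt_of_lt_liminf hd).eventually_nhds] with y hy
  rw [lscEnvE_eq_liminf]
  exact hcd.trans_le (le_liminf_of_le (by isBoundedDefault) (hy.mono fun _ => le_of_lt))

/-- `e` is the lower semicontinuous envelope of `u`, and the envelope is finite everywhere. -/
def IsLscEnvelope (u e : X → ℝ) : Prop :=
  ∀ x, (e x : EReal) = lscEnvE u x

namespace IsLscEnvelope

lemma lowerSemicontinuous (he : IsLscEnvelope u e) : LowerSemicontinuous e := by
  intro x c hc
  have hcx : (c : EReal) < lscEnvE u x := he x ▸ EReal.coe_lt_coe_iff.2 hc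
  filter_upwards [lowerSemicontinuous_lscEnvE u x c hcx] with y hy
  exact EReal.coe_lt_coe_iff.1 (he y ▸ hy)

lemma le (he : IsLscEnvelope u e) : e ≤ u := by
  intro x
  rw [← EReal.coe_le_coe_iff, he x, lscEnvE_eq_liminf]
  exact liminf_le_of_frequently_le' (mem_of_mem_nhds · |>.elim le_rfl)

lemma le_of_lowerSemicontinuous (he : IsLscEnvelope u e) (hg : LowerSemicontinuous g)
    (hgu : g ≤ u) : g ≤ e := by
  intro x
  have hg' : LowerSemicontinuous fun y => (g y : EReal) :=
    continuous_coe_real_ereal.comp_lowerSemicontinuous hg EReal.coe_strictMono.monotone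
  rw [← EReal.coe_le_coe_iff, he x, lscEnvE_eq_liminf]
  exact (hg'.le_liminf x).trans (liminf_le_liminf (.of_forall fun y => mod_cast hgu y))

lemma wNorm_lt_top (he : IsLscEnvelope u e) {W : X → ℝ} (hW : ∀ x, 0 < W x)
    (hWc : Continuous W) (hu : WNorm W u < ⊤) : WNorm W e < ⊤ := by
  have hu_abs := abs_le_wNorm_mul hW hu
  refine wNorm_lt_top_of_abs_le (k := (WNorm W u).toReal) hW fun x => abs_le.2
    ⟨?_, (he.le x).trans (abs_le.1 (hu_abs x)).2⟩
  exact he.le_of_lowerSemicontinuous (continuous_const.mul hWc).neg.lowerSemicontinuous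
    (fun y => (abs_le.1 (hu_abs y)).1) x

end IsLscEnvelope

end LscEnvelope

section WeakConvergence

variable {X : Type*} [TopologicalSpace X] [MeasurableSpace X] [OpensMeasurableSpace X]
  [HasOuterApproxClosed X] {g : X → ℝ}

-- The layer cake formula reduces the claim to the open sets `{t < g}`, for which it is
-- the portmanteau theorem, and to Fatou's lemma in `t`.
lemma lintegral_ofReal_le_liminf_of_tendsto {ι : Type*} {L : Filter ι} [L.IsCountablyGenerated]
    {μ : ProbabilityMeasure X} {μs : ι → ProbabilityMeasure X} (hμ : Tendsto μs L (𝓝 μ))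
    (hg : LowerSemicontinuous g) (hg0 : 0 ≤ g) :
    ∫⁻ y, ENNReal.ofReal (g y) ∂(μ : Measure X) ≤
      liminf (fun i => ∫⁻ y, ENNReal.ofReal (g y) ∂(μs i : Measure X)) L := by
  simp_rw [lintegral_eq_lintegral_meas_lt _ (.of_forall hg0) hg.measurable.aemeasurable]
  calc ∫⁻ t in Set.Ioi 0, (μ : Measure X) {y | t < g y}
      ≤ ∫⁻ t in Set.Ioi 0, liminf (fun i => (μs i : Measure X) {y | t < g y}) L :=
        lintegral_mono fun t =>
          ProbabilityMeasure.le_liminf_measure_open_of_tendsto hμ (hg.isOpen_preimage t)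
    _ ≤ liminf (fun i => ∫⁻ t in Set.Ioi 0, (μs i : Measure X) {y | t < g y}) L :=
        lintegral_liminf_le fun i => Antitone.measurable fun _ _ hst =>
          measure_mono fun _ hy => lt_of_le_of_lt hst hy

variable {P : Type*} [TopologicalSpace P] [MeasurableSpace P] {Q : Kernel P X} {K : Set P}

/-- Weak continuity on `K` of a transition kernel: integrals of bounded continuous functions depend
continuously on the parameter in `K`. -/
def WeaklyContinuousOn (Q : Kernel P X) (K : Set P) : Prop :=
  ∀ g : X → ℝ, Continuous g → (∃ b, ∀ y, |g y| ≤ b) → ContinuousOn (fun p => ∫ y, g y ∂(Q p)) K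

namespace WeaklyContinuousOn

variable [FirstCountableTopology P] [IsMarkovKernel Q]

lemma lowerSemicontinuousOn_lintegral_ofReal (hQ : WeaklyContinuousOn Q K)
    (hg : LowerSemicontinuous g) (hg0 : 0 ≤ g) :
    LowerSemicontinuousOn (fun p => ∫⁻ y, ENNReal.ofReal (g y) ∂(Q p)) K := by
  rw [lowerSemicontinuousOn_iff_le_liminf]
  intro p hp
  let law : P → ProbabilityMeasure X := fun q => ⟨Q q, inferInstance⟩
  have hlaw : Tendsto law (𝓝[K] p) (𝓝 (law p)) :=
    ProbabilityMeasure.tendsto_iff_forall_integral_tendsto.2 fun φ =>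
      hQ φ φ.continuous ⟨‖φ‖, φ.norm_coe_le_norm⟩ p hp
  exact lintegral_ofReal_le_liminf_of_tendsto hlaw hg hg0

lemma lowerSemicontinuousOn_integral_of_nonneg (hQ : WeaklyContinuousOn Q K)
    (hg : LowerSemicontinuous g) (hg0 : 0 ≤ g) (hgi : ∀ p ∈ K, Integrable g (Q p)) :
    LowerSemicontinuousOn (fun p => ∫ y, g y ∂(Q p)) K := by
  have hofReal : ∀ p ∈ K, ENNReal.ofReal (∫ y, g y ∂(Q p)) = ∫⁻ y, ENNReal.ofReal (g y) ∂(Q p) :=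
    fun p hp => ofReal_integral_eq_lintegral_ofReal (hgi p hp) (.of_forall hg0)
  intro p hp c hc
  rcases lt_or_ge c 0 with hc0 | hc0
  · exact .of_forall fun q => hc0.trans_le (integral_nonneg hg0)
  · have hcp := (ENNReal.ofReal_lt_ofReal_iff_of_nonneg hc0).2 hc
    rw [hofReal p hp] at hcp
    filter_upwards [hQ.lowerSemicontinuousOn_lintegral_ofReal hg hg0 p hp _ hcp,
      self_mem_nhdsWithin] with q hq hqK
    rw [← hofReal q hqK] at hq
    exact (ENNReal.ofReal_lt_ofReal_iff_of_nonneg hc0).1 hq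

lemma lowerSemicontinuousOn_integral (hQ : WeaklyContinuousOn Q K) {h u : X → ℝ}
    (hh : Continuous h) (hhi : ∀ p ∈ K, Integrable h (Q p))
    (hhQ : ContinuousOn (fun p => ∫ y, h y ∂(Q p)) K)
    (hu : LowerSemicontinuous u) (hui : ∀ p ∈ K, Integrable u (Q p)) (hle : h ≤ u) :
    LowerSemicontinuousOn (fun p => ∫ y, u y ∂(Q p)) K := by
  have hsub : LowerSemicontinuousOn (fun p => ∫ y, (u y + -h y) ∂(Q p)) K :=
    hQ.lowerSemicontinuousOn_integral_of_nonneg (hu.add hh.neg.lowerSemicontinuous)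
      (fun y => le_add_neg_iff_le.2 (hle y)) fun p hp => (hui p hp).add (hhi p hp).neg
  have hsplit : ∀ q ∈ K, ∫ y, (u y + -h y) ∂(Q q) + ∫ y, h y ∂(Q q) = ∫ y, u y ∂(Q q) := by
    intro q hq
    have hadd : ∫ y, (u y + -h y) ∂(Q q) = ∫ y, u y ∂(Q q) + ∫ y, -h y ∂(Q q) :=
      integral_add (hui q hq) (hhi q hq).neg
    rw [hadd, integral_neg, neg_add_cancel_right]
  exact fun p hp => LowerSemicontinuousWithinAt.congr_of_eventuallyEq
    ((hsub.add hhQ.lowerSemicontinuousOn) p hp) hp (eventually_mem_nhdsWithin.mono hsplit)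

end WeaklyContinuousOn

end WeakConvergence

section ParametricInfimum

variable {X A : Type*} [TopologicalSpace X] [TopologicalSpace A] {Adm : X → Set A} {G : X × A → ℝ}

lemma bddBelow_image_of_lowerSemicontinuousOn_graph
    (hG : LowerSemicontinuousOn G {p : X × A | p.2 ∈ Adm p.1}) {x : X} (hx : IsCompact (Adm x)) :
    BddBelow ((fun a => G (x, a)) '' Adm x) :=
  LowerSemicontinuousOn.bddBelow_of_isCompact hx <|
    hG.comp (Continuous.prodMk_right x).continuousOn fun _ ha => ha

-- The lower semicontinuous half of Berge's maximum theorem.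
lemma lowerSemicontinuous_sInf_image (hne : ∀ x, (Adm x).Nonempty)
    (hcomp : ∀ x, IsCompact (Adm x)) (husc : UpperHemicontinuous Adm)
    (hG : LowerSemicontinuousOn G {p : X × A | p.2 ∈ Adm p.1}) :
    LowerSemicontinuous fun x => sInf ((fun a => G (x, a)) '' Adm x) := by
  intro x c hc
  obtain ⟨d, hcd, hd⟩ := exists_between hc
  have hnear : {p : X × A | p.2 ∈ Adm p.1 → d < G p} ∈ 𝓝 x ×ˢ 𝓝ˢ (Adm x) := by
    refine (hcomp x).mem_prod_nhdsSet_of_forall fun a ha => ?_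
    rw [← nhds_prod_eq]
    have hda : d < G (x, a) := hd.trans_le <|
      csInf_le (bddBelow_image_of_lowerSemicontinuousOn_graph hG (hcomp x)) ⟨a, ha, rfl⟩
    exact eventually_nhdsWithin_iff.1 (hG (x, a) ha d hda)
  obtain ⟨N, hN, U, hU, hNU⟩ := mem_prod_iff.1 hnear
  filter_upwards [hN, husc x U hU] with y hyN hyU
  refine hcd.trans_le (le_csInf ((hne y).image _) ?_)
  rintro _ ⟨a, ha, rfl⟩
  exact (hNU ⟨hyN, subset_of_mem_nhdsSet hyU ha⟩ ha).le

end ParametricInfimum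

section CostToGo

variable {P X : Type*} [MeasurableSpace P] [MeasurableSpace X] {Q : Kernel P X} {C : P → ℝ} {α : ℝ}
  {u w W : X → ℝ} {p : P}

/-- The cost `C(p) + α ∫ u dQ(·|p)` of the state-action pair `p = (x, a)` under the terminal
cost `u`: thus `T_f u (x)` is its value at `(x, f x)` and `T u (x)` its infimum over `a ∈ A(x)`. -/
noncomputable def costToGo (Q : Kernel P X) (C : P → ℝ) (α : ℝ) (u : X → ℝ) (p : P) : ℝ :=
  C p + α * ∫ y, u y ∂(Q p)

lemma costToGo_mono (hα : 0 ≤ α) (hu : Integrable u (Q p)) (hw : Integrable w (Q p))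
    (huw : u ≤ w) : costToGo Q C α u p ≤ costToGo Q C α w p :=
  add_le_add_right (mul_le_mul_of_nonneg_left (integral_mono hu hw huw) hα) _

lemma costToGo_sub_le (hα : 0 ≤ α) {k b : ℝ} (hk : 0 ≤ k) (hu : Integrable u (Q p))
    (hw : Integrable w (Q p)) (hW : Integrable W (Q p)) (hWb : ∫ y, W y ∂(Q p) ≤ b)
    (huw : ∀ y, u y - w y ≤ k * W y) :
    costToGo Q C α u p - costToGo Q C α w p ≤ α * (k * b) :=
  calc costToGo Q C α u p - costToGo Q C α w p
      = α * ∫ y, (u y - w y) ∂(Q p) := by rw [integral_sub hu hw, costToGo, costToGo]; ring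
    _ ≤ α * ∫ y, k * W y ∂(Q p) :=
        mul_le_mul_of_nonneg_left (integral_mono (hu.sub hw) (hW.const_mul k) huw) hα
    _ = α * (k * ∫ y, W y ∂(Q p)) := by rw [integral_const_mul]
    _ ≤ α * (k * b) := by gcongr

end CostToGo

section GrowthCondition

variable {X A : Type*} [MeasurableSpace X] [MeasurableSpace A] {Adm : X → Set A}
  {Q : Kernel (X × A) X} {C : X × A → ℝ} {α β : ℝ} {W u w : X → ℝ} {x : X} {a : A}

/-- The part of the growth conditions that bounds the kernel: under every admissible action the
expected weight grows at most by the factor `β`. -/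
structure GrowthCondition (Adm : X → Set A) (Q : Kernel (X × A) X) (β : ℝ) (W : X → ℝ) :
    Prop where
  rate_nonneg : 0 ≤ β
  measurable : Measurable W
  pos : ∀ x, 0 < W x
  lintegral_le : ∀ x, ∀ a ∈ Adm x,
    ∫⁻ y, ENNReal.ofReal (W y) ∂(Q (x, a)) ≤ ENNReal.ofReal (β * W x)

namespace GrowthCondition

lemma integrable_weight (hW : GrowthCondition Adm Q β W) (ha : a ∈ Adm x) :
    Integrable W (Q (x, a)) :=
  (lintegral_ofReal_ne_top_iff_integrable hW.measurable.aestronglyMeasurable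
    (.of_forall fun y => (hW.pos y).le)).1
    ((hW.lintegral_le x a ha).trans_lt ENNReal.ofReal_lt_top).ne

lemma integral_weight_le (hW : GrowthCondition Adm Q β W) (ha : a ∈ Adm x) :
    ∫ y, W y ∂(Q (x, a)) ≤ β * W x := by
  rw [integral_eq_lintegral_of_nonneg_ae (.of_forall fun y => (hW.pos y).le)
    hW.measurable.aestronglyMeasurable]
  exact ENNReal.toReal_le_of_le_ofReal (mul_nonneg hW.rate_nonneg (hW.pos x).le)
    (hW.lintegral_le x a ha)

lemma integrable (hW : GrowthCondition Adm Q β W) (hu : IsWBounded W u) (ha : a ∈ Adm x) :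
    Integrable u (Q (x, a)) :=
  hu.integrable hW.pos (hW.integrable_weight ha)

lemma costToGo_sub_le (hW : GrowthCondition Adm Q β W) (hα : 0 ≤ α) (hu : IsWBounded W u)
    (hw : IsWBounded W w) {k : ℝ} (hk : 0 ≤ k) (huw : ∀ y, u y - w y ≤ k * W y)
    (ha : a ∈ Adm x) :
    costToGo Q C α u (x, a) - costToGo Q C α w (x, a) ≤ α * β * k * W x :=
  (_root_.costToGo_sub_le hα hk (hW.integrable hu ha) (hW.integrable hw ha)
    (hW.integrable_weight ha) (hW.integral_weight_le ha) huw).trans_eq (by ring)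

-- The excess `(u - w)⁺` is contracted by the factor `γ = α β < 1`, hence vanishes.
lemma le_of_le_costToGo_of_costToGo_le (hW : GrowthCondition Adm Q β W) (hα : 0 ≤ α)
    (hγ : α * β < 1) (hu : IsWBounded W u) (hw : IsWBounded W w) {f : X → A}
    (hf : ∀ x, f x ∈ Adm x) (hsub : ∀ x, u x ≤ costToGo Q C α u (x, f x))
    (hsuper : ∀ x, costToGo Q C α w (x, f x) ≤ w x) : u ≤ w := by
  let excess : X → ℝ := fun x => max (u x - w x) 0
  have hfin : WNorm W excess < ⊤ := by
    have hdiff := wNorm_sub_lt_top hW.pos hu.wNorm_lt_top hw.wNorm_lt_top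
    refine wNorm_lt_top_of_abs_le (k := (WNorm W fun x => u x - w x).toReal) hW.pos fun x => ?_
    exact (abs_max_le_max_abs_abs.trans (by simp)).trans (abs_le_wNorm_mul hW.pos hdiff x)
  set k := (WNorm W excess).toReal
  have hk : 0 ≤ k := ENNReal.toReal_nonneg
  have hexcess : ∀ x, excess x ≤ k * W x := fun x =>
    (le_abs_self _).trans (abs_le_wNorm_mul hW.pos hfin x)
  have hγk : 0 ≤ α * β * k := mul_nonneg (mul_nonneg hα hW.rate_nonneg) hk
  have hcontract : ∀ x, |excess x| ≤ α * β * k * W x := by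
    intro x
    rw [abs_of_nonneg (le_max_right _ _)]
    refine max_le ?_ (mul_nonneg hγk (hW.pos x).le)
    linarith [hsub x, hsuper x, hW.costToGo_sub_le (C := C) hα hu hw hk
      (fun y => (le_max_left _ _).trans (hexcess y)) (hf x)]
  have hk_le : k ≤ α * β * k :=
    ENNReal.toReal_le_of_le_ofReal hγk ((wNorm_le_ofReal_iff hW.pos hγk).2 hcontract)
  have hk_zero : k = 0 := by nlinarith
  intro x
  have hx := (le_max_left _ _).trans (hexcess x)
  rw [hk_zero, zero_mul] at hx
  exact sub_nonpos.1 hx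

end GrowthCondition

end GrowthCondition

section PolicyImprovement

variable {X A : Type*} [MetricSpace X] [MeasurableSpace X] [BorelSpace X]
  [TopologicalSpace A] [MeasurableSpace A]
  {Adm : X → Set A} {Q : Kernel (X × A) X} {C : X × A → ℝ} {α β : ℝ} {W u w e v vstar : X → ℝ}
  {f g : X → A}

/-- The compactness-continuity conditions (CC), with upper semicontinuity of `A(·)` expressed as
upper hemicontinuity of a set-valued map. -/
structure CompactnessContinuity (Adm : X → Set A) (Q : Kernel (X × A) X) (C : X × A → ℝ)
    (W : X → ℝ) : Prop where
  nonempty : ∀ x, (Adm x).Nonempty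
  isCompact : ∀ x, IsCompact (Adm x)
  upperHemicontinuous : UpperHemicontinuous Adm
  lowerSemicontinuousOn_cost : LowerSemicontinuousOn C {p : X × A | p.2 ∈ Adm p.1}
  weaklyContinuousOn : WeaklyContinuousOn Q {p : X × A | p.2 ∈ Adm p.1}
  continuous_weight : Continuous W
  continuousOn_integral_weight :
    ContinuousOn (fun p : X × A => ∫ y, W y ∂(Q p)) {p : X × A | p.2 ∈ Adm p.1}

namespace CompactnessContinuity

variable [FirstCountableTopology A] [IsMarkovKernel Q]

lemma lowerSemicontinuousOn_costToGo (hC : CompactnessContinuity Adm Q C W)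
    (hW : GrowthCondition Adm Q β W) (hα : 0 ≤ α) (hu : LowerSemicontinuous u)
    (huW : WNorm W u < ⊤) :
    LowerSemicontinuousOn (costToGo Q C α u) {p : X × A | p.2 ∈ Adm p.1} := by
  let minorant : X → ℝ := fun y => -(WNorm W u).toReal * W y
  have hminorant : ContinuousOn (fun p => ∫ y, minorant y ∂(Q p)) {p : X × A | p.2 ∈ Adm p.1} := by
    simp only [minorant, integral_const_mul]
    exact continuousOn_const.mul hC.continuousOn_integral_weight
  have hle : minorant ≤ u := fun y => by
    have := (abs_le.1 (abs_le_wNorm_mul hW.pos huW y)).1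
    simpa only [minorant, neg_mul] using this
  have hint := hC.weaklyContinuousOn.lowerSemicontinuousOn_integral
    (continuous_const.mul hC.continuous_weight)
    (fun _ hp => (hW.integrable_weight hp).const_mul _) hminorant hu
    (fun _ hp => hW.integrable ⟨hu.measurable, huW⟩ hp) hle
  exact hC.lowerSemicontinuousOn_cost.add <|
    (continuous_const_mul α).comp_lowerSemicontinuousOn hint (monotone_mul_left_of_nonneg hα)

lemma lowerSemicontinuous_tbell (hC : CompactnessContinuity Adm Q C W)
    (hW : GrowthCondition Adm Q β W) (hα : 0 ≤ α) (hu : LowerSemicontinuous u)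
    (huW : WNorm W u < ⊤) : LowerSemicontinuous (Tbell Adm Q C α u) :=
  lowerSemicontinuous_sInf_image hC.nonempty hC.isCompact hC.upperHemicontinuous
    (hC.lowerSemicontinuousOn_costToGo hW hα hu huW)

lemma tbell_le_costToGo (hC : CompactnessContinuity Adm Q C W)
    (hW : GrowthCondition Adm Q β W) (hα : 0 ≤ α) (hu : LowerSemicontinuous u)
    (huW : WNorm W u < ⊤) {x : X} {a : A} (ha : a ∈ Adm x) :
    Tbell Adm Q C α u x ≤ costToGo Q C α u (x, a) :=
  csInf_le (bddBelow_image_of_lowerSemicontinuousOn_graph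
    (hC.lowerSemicontinuousOn_costToGo hW hα hu huW) (hC.isCompact x)) ⟨a, ha, rfl⟩

lemma tbell_sub_le (hC : CompactnessContinuity Adm Q C W) (hW : GrowthCondition Adm Q β W)
    (hα : 0 ≤ α) (hu : LowerSemicontinuous u) (huW : WNorm W u < ⊤) (hw : IsWBounded W w)
    {k : ℝ} (hk : 0 ≤ k) (huw : ∀ y, u y - w y ≤ k * W y) (x : X) :
    Tbell Adm Q C α u x - Tbell Adm Q C α w x ≤ α * β * k * W x := by
  rw [sub_le_comm]
  refine le_csInf ((hC.nonempty x).image _) ?_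
  rintro _ ⟨a, ha, rfl⟩
  rw [sub_le_comm]
  exact (sub_le_sub_right (hC.tbell_le_costToGo hW hα hu huW ha) _).trans
    (hW.costToGo_sub_le hα ⟨hu.measurable, huW⟩ hw hk huw ha)

lemma tbell_envelope_le (hC : CompactnessContinuity Adm Q C W) (hW : GrowthCondition Adm Q β W)
    (hα : 0 ≤ α) (hv : IsWBounded W v) (hf : ∀ x, f x ∈ Adm x)
    (hvf : ∀ x, v x = costToGo Q C α v (x, f x)) (he : IsLscEnvelope v e) :
    Tbell Adm Q C α e ≤ e := by
  have he_lsc := he.lowerSemicontinuous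
  have heW := he.wNorm_lt_top hW.pos hC.continuous_weight hv.wNorm_lt_top
  refine he.le_of_lowerSemicontinuous (hC.lowerSemicontinuous_tbell hW hα he_lsc heW) fun x => ?_
  calc Tbell Adm Q C α e x ≤ costToGo Q C α e (x, f x) :=
        hC.tbell_le_costToGo hW hα he_lsc heW (hf x)
    _ ≤ costToGo Q C α v (x, f x) :=
        costToGo_mono hα (hW.integrable ⟨he_lsc.measurable, heW⟩ (hf x)) (hW.integrable hv (hf x))
          he.le
    _ = v x := (hvf x).symm

lemma le_tbell_envelope (hC : CompactnessContinuity Adm Q C W) (hW : GrowthCondition Adm Q β W)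
    (hα : 0 ≤ α) (hγ : α * β < 1) (hv : IsWBounded W v) (hf : ∀ x, f x ∈ Adm x)
    (hvf : ∀ x, v x = costToGo Q C α v (x, f x)) (he : IsLscEnvelope v e)
    (hg : ∀ x, g x ∈ Adm x) (heg : ∀ x, Tbell Adm Q C α e x = costToGo Q C α e (x, g x))
    (hw : IsWBounded W w) (hwg : ∀ x, w x = costToGo Q C α w (x, g x)) :
    w ≤ Tbell Adm Q C α e := by
  have heW : IsWBounded W e :=
    ⟨he.lowerSemicontinuous.measurable, he.wNorm_lt_top hW.pos hC.continuous_weight hv.wNorm_lt_top⟩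
  have hwe : w ≤ e := hW.le_of_le_costToGo_of_costToGo_le hα hγ hw heW hg (fun x => (hwg x).le)
    fun x => (heg x).ge.trans (hC.tbell_envelope_le hW hα hv hf hvf he x)
  intro x
  rw [hwg x, heg x]
  exact costToGo_mono hα (hW.integrable hw (hg x)) (hW.integrable heW (hg x)) hwe

lemma le_of_eq_tbell (hC : CompactnessContinuity Adm Q C W) (hW : GrowthCondition Adm Q β W)
    (hα : 0 ≤ α) (hγ : α * β < 1) (hstar : LowerSemicontinuous vstar)
    (hstarW : WNorm W vstar < ⊤) (hfix : ∀ x, vstar x = Tbell Adm Q C α vstar x)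
    (hv : IsWBounded W v) (hf : ∀ x, f x ∈ Adm x)
    (hvf : ∀ x, v x = costToGo Q C α v (x, f x)) : vstar ≤ v :=
  hW.le_of_le_costToGo_of_costToGo_le hα hγ ⟨hstar.measurable, hstarW⟩ hv hf
    (fun x => (hfix x).trans_le (hC.tbell_le_costToGo hW hα hstar hstarW (hf x)))
    fun x => (hvf x).ge

lemma wNorm_policyImprovement_sub_le (hC : CompactnessContinuity Adm Q C W)
    (hW : GrowthCondition Adm Q β W) (hα : 0 ≤ α) (hγ : α * β < 1) (hv : IsWBounded W v)
    (hf : ∀ x, f x ∈ Adm x) (hvf : ∀ x, v x = costToGo Q C α v (x, f x))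
    (he : IsLscEnvelope v e) (hg : ∀ x, g x ∈ Adm x)
    (heg : ∀ x, Tbell Adm Q C α e x = costToGo Q C α e (x, g x)) (hw : IsWBounded W w)
    (hwg : ∀ x, w x = costToGo Q C α w (x, g x)) (hstar : LowerSemicontinuous vstar)
    (hstarW : WNorm W vstar < ⊤) (hfix : ∀ x, vstar x = Tbell Adm Q C α vstar x) :
    WNorm W (fun x => w x - vstar x) ≤
      ENNReal.ofReal (α * β) * WNorm W (fun x => v x - vstar x) := by
  have hfin := wNorm_sub_lt_top hW.pos hv.wNorm_lt_top hstarW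
  set k := (WNorm W fun x => v x - vstar x).toReal with hk_def
  have hk : 0 ≤ k := ENNReal.toReal_nonneg
  have hγ0 : 0 ≤ α * β := mul_nonneg hα hW.rate_nonneg
  have hev : ∀ y, e y - vstar y ≤ k * W y := fun y =>
    (sub_le_sub_right (he.le y) _).trans ((le_abs_self _).trans (abs_le_wNorm_mul hW.pos hfin y))
  rw [← ENNReal.ofReal_toReal hfin.ne, ← hk_def, ← ENNReal.ofReal_mul hγ0,
    wNorm_le_ofReal_iff hW.pos (mul_nonneg hγ0 hk)]
  intro x
  rw [abs_of_nonneg (sub_nonneg.2 (hC.le_of_eq_tbell hW hα hγ hstar hstarW hfix hw hg hwg x))]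
  calc w x - vstar x
      ≤ Tbell Adm Q C α e x - Tbell Adm Q C α vstar x :=
        sub_le_sub (hC.le_tbell_envelope hW hα hγ hv hf hvf he hg heg hw hwg x) (hfix x).ge
    _ ≤ α * β * k * W x :=
        hC.tbell_sub_le hW hα he.lowerSemicontinuous
          (he.wNorm_lt_top hW.pos hC.continuous_weight hv.wNorm_lt_top)
          ⟨hstar.measurable, hstarW⟩ hk hev x

end CompactnessContinuity

theorem policy_iteration_linear_convergence_general [FirstCountableTopology A] [IsMarkovKernel Q]
    (hC : CompactnessContinuity Adm Q C W) (hW : GrowthCondition Adm Q β W)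
    (hα : 0 ≤ α) (hγ : α * β < 1) {f : ℕ → X → A} (hf : ∀ n x, f n x ∈ Adm x)
    {v : ℕ → X → ℝ} (hv : ∀ n, IsWBounded W (v n))
    (hvf : ∀ n x, v n x = costToGo Q C α (v n) (x, f n x))
    {e : ℕ → X → ℝ} (he : ∀ n, IsLscEnvelope (v n) (e n))
    (hef : ∀ n x, Tbell Adm Q C α (e n) x = costToGo Q C α (e n) (x, f (n + 1) x))
    (hstar : LowerSemicontinuous vstar) (hstarW : WNorm W vstar < ⊤)
    (hfix : ∀ x, vstar x = Tbell Adm Q C α vstar x) :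
    (∀ n, WNorm W (fun x => v (n + 1) x - vstar x) ≤
      ENNReal.ofReal (α * β) * WNorm W (fun x => v n x - vstar x)) ∧
    ∀ n, WNorm W (fun x => v n x - vstar x) ≤
      ENNReal.ofReal (α * β) ^ n * WNorm W (fun x => v 0 x - vstar x) := by
  have hstep : ∀ n, WNorm W (fun x => v (n + 1) x - vstar x) ≤
      ENNReal.ofReal (α * β) * WNorm W (fun x => v n x - vstar x) := fun n =>
    hC.wNorm_policyImprovement_sub_le hW hα hγ (hv n) (hf n) (hvf n) (he n) (hf (n + 1)) (hef n)
      (hv (n + 1)) (hvf (n + 1)) hstar hstarW hfix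
  refine ⟨hstep, fun n => ?_⟩
  induction n with
  | zero => rw [pow_zero, one_mul]
  | succ n ih =>
    rw [pow_succ', mul_assoc]
    exact (hstep n).trans (mul_le_mul_right ih _)

end PolicyImprovement

/-- Linear convergence of the policy iteration algorithm with smoothing: under
(GC) and (CC), with `v*` the lower semicontinuous fixed point of `T` of finite
`W`-norm and `v_n = V_{f_n}` the policy iteration functions,
`‖v_{n+1} − v*‖_W ≤ γ ‖v_n − v*‖_W` and hence
`‖v_n − v*‖_W ≤ γⁿ ‖v_0 − v*‖_W`, where `γ = αβ` (Corollary 1 of the paper). -/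
theorem policy_iteration_linear_convergence {X A : Type*}
    [MetricSpace X] [PolishSpace X] [MeasurableSpace X] [BorelSpace X]
    [MetricSpace A] [PolishSpace A] [MeasurableSpace A] [BorelSpace A]
    (Adm : X → Set A) (hAne : ∀ x, (Adm x).Nonempty)
    (hKmeas : MeasurableSet {p : X × A | p.2 ∈ Adm p.1})
    (Q : Kernel (X × A) X) [IsMarkovKernel Q]
    (C : X × A → ℝ) (hCmeas : Measurable C)
    (α : ℝ) (hα0 : 0 < α) (hα1 : α < 1)
    (M β : ℝ) (hM : 0 < M) (hβ : 1 < β)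
    (W : X → ℝ) (hWmeas : Measurable W) (hW1 : ∀ x, 1 ≤ W x)
    (hCW : ∀ x, ∀ a ∈ Adm x, |C (x, a)| ≤ M * W x)
    (hQW : ∀ x, ∀ a ∈ Adm x,
      ∫⁻ y, ENNReal.ofReal (W y) ∂(Q (x, a)) ≤ ENNReal.ofReal (β * W x))
    (hγ : α * β < 1)
    (hAcomp : ∀ x, IsCompact (Adm x))
    (hAusc : ∀ x, ∀ U : Set A, IsOpen U → Adm x ⊆ U → ∀ᶠ x' in 𝓝 x, Adm x' ⊆ U)
    (hClsc : LowerSemicontinuousOn C {p : X × A | p.2 ∈ Adm p.1})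
    (hQweak : ∀ g : X → ℝ, Continuous g → (∃ b, ∀ y, |g y| ≤ b) →
      ContinuousOn (fun p : X × A => ∫ y, g y ∂(Q p)) {p : X × A | p.2 ∈ Adm p.1})
    (hWcont : Continuous W)
    (hQWcont : ContinuousOn (fun p : X × A => ∫ y, W y ∂(Q p))
      {p : X × A | p.2 ∈ Adm p.1})
    (f : ℕ → X → A) (hfmeas : ∀ n, Measurable (f n))
    (hfsel : ∀ n x, f n x ∈ Adm x)
    (v : ℕ → X → ℝ) (hvmeas : ∀ n, Measurable (v n))
    (hvW : ∀ n, WNorm W (v n) < ⊤)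
    (hvfix : ∀ n x, v n x = C (x, f n x) + α * ∫ y, v n y ∂(Q (x, f n x)))
    (e : ℕ → X → ℝ) (hE : ∀ n x, (e n x : EReal) = lscEnvE (v n) x)
    (himp : ∀ n x, Tbell Adm Q C α (e n) x =
      C (x, f (n + 1) x) + α * ∫ y, e n y ∂(Q (x, f (n + 1) x)))
    (vstar : X → ℝ) (hvstarlsc : LowerSemicontinuous vstar)
    (hvstarW : WNorm W vstar < ⊤)
    (hvstarfix : ∀ x, vstar x = Tbell Adm Q C α vstar x) :
    (∀ n, WNorm W (fun x => v (n + 1) x - vstar x) ≤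
      ENNReal.ofReal (α * β) * WNorm W (fun x => v n x - vstar x)) ∧
    ∀ n, WNorm W (fun x => v n x - vstar x) ≤
      ENNReal.ofReal (α * β) ^ n * WNorm W (fun x => v 0 x - vstar x) := by
  exact policy_iteration_linear_convergence_general
    ⟨hAne, hAcomp, upperHemicontinuous_iff_forall_isOpen.2 hAusc, hClsc, hQweak, hWcont, hQWcont⟩
    ⟨by positivity, hWmeas, fun x => one_pos.trans_le (hW1 x), hQW⟩
    hα0.le hγ hfsel (fun n => ⟨hvmeas n, hvW n⟩) hvfix hE himp hvstarlsc hvstarW hvstarfix
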